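/- Let f be a continuous function on the unit circle bΔ such that for every nonnegative integer n and every polynomial P with z^n f(z) + P(z) nonvanishing on bΔ, the winding number of z ↦ z^n f(z) + P(z) around 0 is nonnegative. Then ∫_{bΔ} z^n f(z) dz = 0 for every nonnegative integer n, and consequently f extends holomorphically through the open unit disc. -/

import Mathlib

/-!
On the unit circle `dz = i z dθ`, so if `∮ zⁿ f(z) dz ≠ 0` then some constant multiple `v` of
`zⁿ⁺¹ f` has a mean with positive real part. Approximating `v` by `A + conj B` with polynomials `A`
and `B`, the real part of `v` is close to that of the polynomial `A + B`, whose value at the origin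
is close to the mean of `v`. Subtracting the part of `A + B` that vanishes at the origin therefore
moves `v` into the right half-plane, and division by `z` turns this into a function `zⁿ f + P` of
winding number `-1`.

Once all these integrals vanish, the identity `P(w, z) / z = 1 / (z - w) + w̄ / (1 - w̄ z)` for the
Poisson kernel on the circle shows that the Poisson integral of `f`, which always extends `f`
continuously to the closed disc, is equal to the Cauchy integral of `f`, which is holomorphic.
-/

open Polynomial Metric
open scoped Classical

/-- `g` (restricted to the unit circle) has winding number `n` around `0`:
there is a continuous argument lift `α` along `θ ↦ g (exp (iθ))` whose total
increase over `[0, 2π]` is `2πn`. -/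
def HasWindingNumber (g : ℂ → ℂ) (n : ℤ) : Prop :=
  ∃ α : ℝ → ℝ, Continuous α ∧
    (∀ θ : ℝ, g (Complex.exp (θ * Complex.I)) =
      (‖g (Complex.exp (θ * Complex.I))‖ : ℂ) * Complex.exp (α θ * Complex.I)) ∧
    α (2 * Real.pi) - α 0 = n * (2 * Real.pi)

/-- `f` on the unit circle extends continuously to the closed unit disc,
holomorphically on the open unit disc. -/
def ExtendsHolo (f : ℂ → ℂ) : Prop :=
  ∃ F : ℂ → ℂ, ContinuousOn F (closedBall 0 1) ∧
    DifferentiableOn ℂ F (ball 0 1) ∧ ∀ z ∈ sphere (0:ℂ) 1, F z = f z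

/-- Multiplicity of a zero of a (holomorphic) function: least `n` with
nonvanishing `n`-th derivative. -/
noncomputable def holoOrder (f : ℂ → ℂ) (z : ℂ) : ℕ :=
  sInf {n | iteratedDeriv n f z ≠ 0}

section Approximation

open Real ComplexConjugate

theorem exists_eq_toAddCircle_add_star_of_mem_span_fourier {p : C(AddCircle (2 * π), ℂ)}
    (hp : p ∈ Submodule.span ℂ (Set.range (@fourier (2 * π)))) :
    ∃ A B : ℂ[X], p = A.toAddCircle + star B.toAddCircle := by
  induction hp using Submodule.span_induction with
  | mem q hq =>
    obtain ⟨n, rfl⟩ := hq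
    obtain ⟨k, rfl | rfl⟩ := n.eq_nat_or_neg
    · exact ⟨X ^ k, 0, by rw [toAddCircle_X_pow_eq_fourier, map_zero, star_zero, add_zero]⟩
    · refine ⟨0, X ^ k, ?_⟩
      rw [toAddCircle_X_pow_eq_fourier, map_zero, zero_add]
      ext x
      exact fourier_neg
  | zero => exact ⟨0, 0, by simp⟩
  | add p q _ _ hp hq =>
    obtain ⟨A, B, rfl⟩ := hp
    obtain ⟨A', B', rfl⟩ := hq
    exact ⟨A + A', B + B', by rw [map_add, map_add, star_add]; abel⟩
  | smul c p _ hp =>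
    obtain ⟨A, B, rfl⟩ := hp
    exact ⟨c • A, conj c • B, by simp [star_smul]⟩

theorem exists_polynomial_add_conj_near {f : ℂ → ℂ} (hf : ContinuousOn f (sphere 0 1))
    {ε : ℝ} (hε : 0 < ε) :
    ∃ A B : ℂ[X], ∀ z ∈ sphere (0 : ℂ) 1, ‖f z - (A.eval z + conj (B.eval z))‖ < ε := by
  have : Fact (0 < 2 * π) := ⟨two_pi_pos⟩
  let g : C(AddCircle (2 * π), ℂ) :=
    ⟨fun x ↦ f (AddCircle.toCircle x), hf.comp_continuous
      (continuous_subtype_val.comp AddCircle.continuous_toCircle) fun x ↦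
        mem_sphere_zero_iff_norm.2 (Circle.norm_coe _)⟩
  have hg : g ∈ (Submodule.span ℂ (Set.range (@fourier (2 * π)))).topologicalClosure :=
    span_fourier_closure_eq_top (T := 2 * π) ▸ Submodule.mem_top
  obtain ⟨p, hp, hgp⟩ := Metric.mem_closure_iff.1 hg ε hε
  obtain ⟨A, B, rfl⟩ := exists_eq_toAddCircle_add_star_of_mem_span_fourier hp
  refine ⟨A, B, fun z hz ↦ ?_⟩
  obtain ⟨x, hx⟩ := (AddCircle.homeomorphCircle two_pi_pos.ne').surjective
    ⟨z, by simpa [Submonoid.unitSphere] using hz⟩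
  obtain rfl : (AddCircle.toCircle x : ℂ) = z := by
    rw [← AddCircle.homeomorphCircle_apply two_pi_pos.ne', hx]
  simpa [g, dist_eq_norm, toAddCircle] using
    (ContinuousMap.dist_apply_le_dist (f := g) x).trans_lt hgp

theorem continuous_eval_add_conj_eval (A B : ℂ[X]) :
    Continuous fun z ↦ A.eval z + conj (B.eval z) :=
  A.continuous.add (Complex.continuous_conj.comp B.continuous)

end Approximation

section PoissonKernel

open Real

variable {E : Type*} [NormedAddCommGroup E] [NormedSpace ℝ E] {c w z : ℂ} {R : ℝ}

theorem norm_circleAverage_le_circleAverage_norm (f : ℂ → E) (c : ℂ) (R : ℝ) :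
    ‖circleAverage f c R‖ ≤ circleAverage (fun z ↦ ‖f z‖) c R := by
  rw [circleAverage, circleAverage, norm_smul, smul_eq_mul, norm_of_nonneg (by positivity)]
  gcongr
  exact intervalIntegral.norm_integral_le_integral_norm two_pi_pos.le

theorem continuousOn_poissonKernel_sphere (hw : w ∈ ball c R) :
    ContinuousOn (poissonKernel c w) (sphere c |R|) := by
  rw [poissonKernel_eq_re_herglotzRieszKernel]
  exact Complex.continuous_re.comp_continuousOn (continuousOn_herglotzRieszKernel_sphere hw)

theorem poissonKernel_nonneg (hz : z ∈ sphere c R) (hw : w ∈ closedBall c R) :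
    0 ≤ poissonKernel c w z := by
  rw [mem_sphere_iff_norm] at hz
  rw [mem_closedBall_iff_norm, ← hz] at hw
  rw [poissonKernel_def]
  exact div_nonneg (sub_nonneg.2 (by gcongr)) (by positivity)

theorem circleAverage_poissonKernel (hw : w ∈ ball c R) :
    circleAverage (poissonKernel c w) c R = 1 := by
  have hreal : (poissonKernel c w • fun _ ↦ (1 : ℂ)) = Complex.ofRealCLM ∘ poissonKernel c w := by
    ext z; simp
  rw [← Complex.ofReal_eq_one, ← Complex.ofRealCLM_apply,
    ← Complex.ofRealCLM.circleAverage_comp_comm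
      (continuousOn_poissonKernel_sphere hw).circleIntegrable', ← hreal]
  exact (diffContOnCl_const (c := (1 : ℂ))).circleAverage_poissonKernel_smul hw

theorem norm_circleAverage_poissonKernel_smul_le {g : ℂ → E} {ε : ℝ}
    (hg : ContinuousOn g (sphere c R)) (h : ∀ z ∈ sphere c R, ‖g z‖ ≤ ε) (hw : w ∈ ball c R) :
    ‖circleAverage (poissonKernel c w • g) c R‖ ≤ ε := by
  have hR : |R| = R := abs_of_pos (pos_of_mem_ball hw)
  have hP := continuousOn_poissonKernel_sphere hw
  calc ‖circleAverage (poissonKernel c w • g) c R‖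
      ≤ circleAverage (fun z ↦ ‖(poissonKernel c w • g) z‖) c R :=
        norm_circleAverage_le_circleAverage_norm _ _ _
    _ ≤ circleAverage (fun z ↦ ε • poissonKernel c w z) c R := by
        refine circleAverage_mono (hP.smul (hR.symm ▸ hg)).norm.circleIntegrable'
          (hP.const_smul ε).circleIntegrable' fun z hz ↦ ?_
        rw [hR] at hz
        have hnonneg := poissonKernel_nonneg hz (ball_subset_closedBall hw)
        rw [Pi.smul_apply', norm_smul, norm_of_nonneg hnonneg, smul_eq_mul, mul_comm]
        gcongr
        exact h z hz
    _ = ε := by rw [circleAverage_fun_smul, circleAverage_poissonKernel hw, smul_eq_mul, mul_one]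

end PoissonKernel

section PoissonIntegral

open Real ComplexConjugate

variable {E : Type*} [NormedAddCommGroup E] [NormedSpace ℂ E] {w : ℂ}

/-- The Poisson integral over the unit circle: the solution at `w`, for `‖w‖ < 1`, of the Dirichlet
problem on the unit disc with boundary values `f`. -/
noncomputable def poissonIntegral (f : ℂ → E) (w : ℂ) : E :=
  circleAverage (poissonKernel 0 w • f) 0 1

theorem continuousOn_poissonKernel_smul {f : ℂ → E} (hf : ContinuousOn f (sphere 0 1))
    (hw : w ∈ ball 0 1) : ContinuousOn (poissonKernel 0 w • f) (sphere 0 1) :=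
  (abs_one (α := ℝ) ▸ continuousOn_poissonKernel_sphere hw).smul hf

theorem poissonIntegral_zero (f : ℂ → E) : poissonIntegral f 0 = circleAverage f 0 1 :=
  circleAverage_congr_sphere fun z hz ↦ by simp_all [poissonKernel_def]

theorem poissonIntegral_add_conj {g h : ℂ → ℂ} (hg : DiffContOnCl ℂ g (ball 0 1))
    (hh : DiffContOnCl ℂ h (ball 0 1)) (hw : w ∈ ball 0 1) :
    poissonIntegral (fun z ↦ g z + conj (h z)) w = g w + conj (h w) := by
  have hPg := continuousOn_poissonKernel_smul
    (hg.continuousOn_ball.mono sphere_subset_closedBall) hw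
  have hPh := continuousOn_poissonKernel_smul
    (hh.continuousOn_ball.mono sphere_subset_closedBall) hw
  have hconj : circleAverage (Complex.conjCLE ∘ (poissonKernel 0 w • h)) 0 1 = conj (h w) := by
    rw [← hh.circleAverage_poissonKernel_smul hw]
    exact (Complex.conjCLE : ℂ →L[ℝ] ℂ).circleAverage_comp_comm (hPh.circleIntegrable zero_le_one)
  calc poissonIntegral (fun z ↦ g z + conj (h z)) w
      = circleAverage (poissonKernel 0 w • g + Complex.conjCLE ∘ (poissonKernel 0 w • h)) 0 1 := by
        rw [poissonIntegral]
        congr 1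
        ext z
        simp
    _ = g w + conj (h w) := by
        rw [circleAverage_add (hPg.circleIntegrable zero_le_one)
          ((Complex.conjCLE.continuous.comp_continuousOn hPh).circleIntegrable zero_le_one),
          hg.circleAverage_poissonKernel_smul hw, hconj]

theorem norm_poissonIntegral_sub_le {f : ℂ → ℂ} {A B : ℂ[X]} {ε : ℝ}
    (hf : ContinuousOn f (sphere 0 1))
    (h : ∀ z ∈ sphere (0 : ℂ) 1, ‖f z - (A.eval z + conj (B.eval z))‖ ≤ ε) (hw : w ∈ ball 0 1) :
    ‖poissonIntegral f w - (A.eval w + conj (B.eval w))‖ ≤ ε := by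
  have hAB := (continuous_eval_add_conj_eval A B).continuousOn (s := sphere 0 1)
  rw [← poissonIntegral_add_conj A.differentiable.diffContOnCl B.differentiable.diffContOnCl hw,
    poissonIntegral, poissonIntegral,
    ← circleAverage_sub ((continuousOn_poissonKernel_smul hf hw).circleIntegrable zero_le_one)
      ((continuousOn_poissonKernel_smul hAB hw).circleIntegrable zero_le_one), ← smul_sub]
  exact norm_circleAverage_poissonKernel_smul_le (hf.sub hAB) h hw

theorem continuousOn_piecewise_poissonIntegral {f : ℂ → ℂ} (hf : ContinuousOn f (sphere 0 1)) :
    ContinuousOn ((ball 0 1).piecewise (poissonIntegral f) f) (closedBall 0 1) := by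
  refine continuousOn_of_uniform_approx_of_continuousOn fun u hu ↦ ?_
  obtain ⟨ε, hε, hεu⟩ := Metric.mem_uniformity_dist.1 hu
  obtain ⟨A, B, hAB⟩ := exists_polynomial_add_conj_near hf (half_pos hε)
  refine ⟨_, (continuous_eval_add_conj_eval A B).continuousOn, fun w hw ↦ hεu ?_⟩
  rw [dist_eq_norm]
  refine lt_of_le_of_lt ?_ (half_lt_self hε)
  by_cases hwb : w ∈ ball 0 1
  · rw [Set.piecewise_eq_of_mem _ _ _ hwb]
    exact norm_poissonIntegral_sub_le hf (fun z hz ↦ (hAB z hz).le) hwb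
  · rw [Set.piecewise_eq_of_notMem _ _ _ hwb]
    exact (hAB w ((mem_closedBall.1 hw).antisymm (not_lt.1 hwb))).le

end PoissonIntegral

section CauchyIntegral

open Real ComplexConjugate

variable {E : Type*} [NormedAddCommGroup E] [NormedSpace ℂ E] {f : ℂ → E} {a w z : ℂ}

theorem hasSum_circleIntegral_one_sub_mul_inv_smul {R : ℝ} (hf : CircleIntegrable f 0 R)
    (ha : ‖a‖ * |R| < 1) :
    HasSum (fun n : ℕ ↦ a ^ n • ∮ z in C(0, R), z ^ n • f z)
      (∮ z in C(0, R), (1 - a * z)⁻¹ • f z) := by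
  have hnorm (θ : ℝ) : ‖a * circleMap 0 R θ‖ = ‖a‖ * |R| := by simp
  have hr : 0 ≤ ‖a‖ * |R| := by positivity
  simp_rw [← circleIntegral.integral_smul, smul_smul, ← mul_pow]
  refine intervalIntegral.hasSum_integral_of_dominated_convergence
    (fun n θ ↦ |R| * (‖a‖ * |R|) ^ n * ‖f (circleMap 0 R θ)‖) (fun n ↦ ?_) (fun n ↦ ?_) ?_ ?_ ?_
  · simp only [deriv_circleMap]
    exact (by fun_prop : Measurable _).aestronglyMeasurable.smul
      ((by fun_prop : Measurable _).aestronglyMeasurable.smul hf.def'.1)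
  · simp [norm_smul, mul_assoc, mul_pow]
  · exact .of_forall fun θ _ ↦ ((summable_geometric_of_lt_one hr ha).mul_left _).mul_right _
  · simp_rw [tsum_mul_right, tsum_mul_left]
    exact hf.norm.const_mul _
  · exact .of_forall fun θ _ ↦ ((hasSum_geometric_of_norm_lt_one
      ((hnorm θ).trans_lt ha)).smul_const _).const_smul _

theorem one_sub_mul_ne_zero (ha : ‖a‖ < 1) (hz : z ∈ sphere 0 1) : 1 - a * z ≠ 0 := by
  refine sub_ne_zero.2 fun h ↦ ha.ne ?_
  simpa [mem_sphere_zero_iff_norm.1 hz] using (congrArg norm h).symm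

theorem inv_mul_poissonKernel (hw : w ∈ ball 0 1) (hz : z ∈ sphere 0 1) :
    z⁻¹ * poissonKernel 0 w z = (z - w)⁻¹ + conj w * (1 - conj w * z)⁻¹ := by
  have hz₁ : ‖z‖ = 1 := mem_sphere_zero_iff_norm.1 hz
  have hz₀ : z ≠ 0 := ne_zero_of_mem_unit_sphere ⟨z, hz⟩
  have hzw : z - w ≠ 0 := sub_ne_zero.2 (sphere_disjoint_ball.ne_of_mem hz hw)
  have hwz : 1 - z * conj w ≠ 0 :=
    mul_comm z (conj w) ▸ one_sub_mul_ne_zero (by simpa using hw) hz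
  have hconj : conj (z - w) = (1 - conj w * z) / z := by
    rw [map_sub, ← Complex.inv_eq_conj hz₁]
    field_simp
  rw [poissonKernel_def]
  push_cast
  rw [sub_zero, sub_zero, ← Complex.mul_conj', ← Complex.mul_conj', ← Complex.mul_conj',
    hconj, ← Complex.inv_eq_conj hz₁]
  field_simp
  ring

theorem poissonIntegral_eq_circleIntegral_sub_inv_smul (hf : ContinuousOn f (sphere 0 1))
    (h : ∀ n : ℕ, (∮ z in C(0, 1), z ^ n • f z) = 0) (hw : w ∈ ball 0 1) :
    poissonIntegral f w = (2 * π * Complex.I : ℂ)⁻¹ • ∮ z in C(0, 1), (z - w)⁻¹ • f z := by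
  have hw₁ : ‖conj w‖ < 1 := by simpa using hw
  have hcauchy : CircleIntegrable (fun z ↦ (z - w)⁻¹ • f z) 0 1 :=
    (((continuousOn_id.sub continuousOn_const).inv₀ fun z hz ↦
      sub_ne_zero.2 (sphere_disjoint_ball.ne_of_mem hz hw)).smul hf).circleIntegrable zero_le_one
  have hreflected : CircleIntegrable (fun z ↦ conj w • (1 - conj w * z)⁻¹ • f z) 0 1 :=
    ((((by fun_prop : ContinuousOn (fun z ↦ 1 - conj w * z) _).inv₀ fun z hz ↦
      one_sub_mul_ne_zero hw₁ hz).smul hf).const_smul _).circleIntegrable zero_le_one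
  have hzero : (∮ z in C(0, 1), (1 - conj w * z)⁻¹ • f z) = 0 := by
    refine (hasSum_circleIntegral_one_sub_mul_inv_smul (hf.circleIntegrable zero_le_one)
      (by simpa using hw₁)).unique ?_
    simp only [h, smul_zero]
    exact hasSum_zero
  rw [poissonIntegral, circleAverage_eq_circleIntegral one_ne_zero]
  congr 1
  calc (∮ z in C(0, 1), (z - 0)⁻¹ • (poissonKernel 0 w • f) z)
      = ∮ z in C(0, 1), ((z - w)⁻¹ • f z + conj w • (1 - conj w * z)⁻¹ • f z) := by
        refine circleIntegral.integral_congr zero_le_one fun z hz ↦ ?_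
        rw [sub_zero, Pi.smul_apply', ← Complex.coe_smul, smul_smul, inv_mul_poissonKernel hw hz,
          add_smul, mul_smul]
    _ = ∮ z in C(0, 1), (z - w)⁻¹ • f z := by
        rw [circleIntegral.integral_add hcauchy hreflected, circleIntegral.integral_smul, hzero,
          smul_zero, add_zero]

theorem extendsHolo_of_forall_circleIntegral_pow_mul_eq_zero {f : ℂ → ℂ}
    (hf : ContinuousOn f (sphere 0 1)) (h : ∀ n : ℕ, (∮ z in C(0, 1), z ^ n * f z) = 0) :
    ExtendsHolo f := by
  refine ⟨(ball 0 1).piecewise (poissonIntegral f) f, continuousOn_piecewise_poissonIntegral hf,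
    ?_, fun z hz ↦ Set.piecewise_eq_of_notMem _ _ _ (sphere_disjoint_ball.notMem_of_mem_left hz)⟩
  have hcauchy : DifferentiableOn ℂ
      (fun w ↦ (2 * π * Complex.I : ℂ)⁻¹ • ∮ z in C(0, 1), (z - w)⁻¹ • f z) (ball 0 1) := by
    simpa only [Metric.eball_coe, NNReal.coe_one] using (hasFPowerSeriesOn_cauchy_integral (R := 1)
      (hf.circleIntegrable zero_le_one) one_pos).differentiableOn
  refine hcauchy.congr fun w hw ↦ ?_
  rw [Set.piecewise_eq_of_mem _ _ _ hw, poissonIntegral_eq_circleIntegral_sub_inv_smul hf h hw]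

end CauchyIntegral

section WindingNumber

open Real

namespace HasWindingNumber

variable {g h : ℂ → ℂ} {m n : ℤ}

theorem congr (hg : HasWindingNumber g n) (hgh : Set.EqOn g h (sphere 0 1)) :
    HasWindingNumber h n := by
  obtain ⟨α, hα, hgα, hinc⟩ := hg
  refine ⟨α, hα, fun θ ↦ ?_, hinc⟩
  rw [← hgh (by simp [Complex.norm_exp_ofReal_mul_I]), ← hgα]

theorem mul (hg : HasWindingNumber g m) (hh : HasWindingNumber h n) :
    HasWindingNumber (fun z ↦ g z * h z) (m + n) := by
  obtain ⟨α, hα, hgα, hαinc⟩ := hg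
  obtain ⟨β, hβ, hhβ, hβinc⟩ := hh
  refine ⟨fun θ ↦ α θ + β θ, hα.add hβ, fun θ ↦ ?_, ?_⟩
  · dsimp only
    nth_rewrite 1 [hgα, hhβ]
    push_cast [norm_mul, add_mul, Complex.exp_add]
    ring
  · push_cast
    linear_combination hαinc + hβinc

theorem const (c : ℂ) : HasWindingNumber (fun _ ↦ c) 0 :=
  ⟨fun _ ↦ c.arg, continuous_const, fun _ ↦ (Complex.norm_mul_exp_arg_mul_I c).symm, by simp⟩

theorem zpow (n : ℤ) : HasWindingNumber (fun z ↦ z ^ n) n := by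
  refine ⟨fun θ ↦ n * θ, by fun_prop, fun θ ↦ ?_, by ring⟩
  dsimp only
  rw [norm_zpow, Complex.norm_exp_ofReal_mul_I, one_zpow, ← Complex.exp_int_mul]
  push_cast
  rw [one_mul, mul_assoc]

theorem of_mem_slitPlane (hg : ContinuousOn g (sphere 0 1))
    (hmem : ∀ z ∈ sphere (0 : ℂ) 1, g z ∈ Complex.slitPlane) : HasWindingNumber g 0 := by
  have hexp (θ : ℝ) : Complex.exp (θ * Complex.I) ∈ sphere (0 : ℂ) 1 := by
    simp [Complex.norm_exp_ofReal_mul_I]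
  refine ⟨fun θ ↦ (g (Complex.exp (θ * Complex.I))).arg, ?_,
    fun θ ↦ (Complex.norm_mul_exp_arg_mul_I _).symm, by simp⟩
  exact continuous_iff_continuousAt.2 fun θ ↦
    ContinuousAt.comp (g := Complex.arg) (Complex.continuousAt_arg (hmem _ (hexp θ)))
    (hg.comp_continuous (by fun_prop) hexp).continuousAt

end HasWindingNumber

theorem exists_polynomial_re_sub_mul_eval_pos {v : ℂ → ℂ} (hv : ContinuousOn v (sphere 0 1))
    (hmean : 0 < (circleAverage v 0 1).re) :
    ∃ Q : ℂ[X], ∀ z ∈ sphere (0 : ℂ) 1, 0 < (v z - z * Q.eval z).re := by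
  obtain ⟨A, B, hAB⟩ := exists_polynomial_add_conj_near hv (half_pos hmean)
  have hmeanAB := norm_poissonIntegral_sub_le hv (fun z hz ↦ (hAB z hz).le) (mem_ball_self one_pos)
  rw [poissonIntegral_zero] at hmeanAB
  refine ⟨(A + B).divX, fun z hz ↦ ?_⟩
  have hdiv : z * (A + B).divX.eval z = A.eval z + B.eval z - (A.eval 0 + B.eval 0) := by
    have := congrArg (eval z) (X_mul_divX_add (A + B))
    rw [eval_add, eval_mul, eval_X, eval_C, coeff_zero_eq_eval_zero, eval_add, eval_add] at this
    rw [← this, add_sub_cancel_right]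
  have hre := (Complex.abs_re_le_norm _).trans_lt (hAB z hz)
  have hre₀ := (Complex.abs_re_le_norm _).trans hmeanAB
  rw [abs_lt] at hre
  rw [abs_le] at hre₀
  simp only [hdiv, Complex.sub_re, Complex.add_re, Complex.conj_re] at *
  linarith [hre.1, hre₀.2]

theorem circleAverage_mul_eq_circleIntegral (g : ℂ → ℂ) :
    circleAverage (fun z ↦ z * g z) 0 1 = (2 * π * Complex.I)⁻¹ * ∮ z in C(0, 1), g z := by
  rw [circleAverage_eq_circleIntegral one_ne_zero, smul_eq_mul]
  congr 1
  refine circleIntegral.integral_congr zero_le_one fun z hz ↦ ?_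
  simp [ne_zero_of_mem_unit_sphere ⟨z, hz⟩]

theorem exists_polynomial_hasWindingNumber_neg_one {g : ℂ → ℂ} (hg : ContinuousOn g (sphere 0 1))
    (hint : (∮ z in C(0, 1), g z) ≠ 0) :
    ∃ P : ℂ[X], (∀ z ∈ sphere (0 : ℂ) 1, g z + P.eval z ≠ 0) ∧
      HasWindingNumber (fun z ↦ g z + P.eval z) (-1) := by
  set a := circleAverage (fun z ↦ z * g z) 0 1 with ha
  have ha₀ : a ≠ 0 := by
    rw [ha, circleAverage_mul_eq_circleIntegral]
    exact mul_ne_zero (inv_ne_zero Complex.two_pi_I_ne_zero) hint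
  have hv : ContinuousOn (fun z ↦ a⁻¹ • (z * g z)) (sphere 0 1) :=
    (continuousOn_id.mul hg).const_smul a⁻¹
  obtain ⟨Q, hQ⟩ := exists_polynomial_re_sub_mul_eval_pos hv (by
    rw [circleAverage_fun_smul, ← ha, smul_eq_mul, inv_mul_cancel₀ ha₀]
    exact one_pos)
  have heq : Set.EqOn (fun z ↦ a * z ^ (-1 : ℤ) * (a⁻¹ • (z * g z) - z * Q.eval z))
      (fun z ↦ g z + (-a • Q).eval z) (sphere 0 1) := fun z hz ↦ by
    have hz₀ : z ≠ 0 := ne_zero_of_mem_unit_sphere ⟨z, hz⟩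
    simp only [eval_smul, smul_eq_mul, zpow_neg_one]
    field_simp
    ring
  refine ⟨-a • Q, fun z hz ↦ ?_, ?_⟩
  · have hz₀ : z ≠ 0 := ne_zero_of_mem_unit_sphere ⟨z, hz⟩
    exact (heq hz).symm.trans_ne (mul_ne_zero (mul_ne_zero ha₀ (zpow_ne_zero _ hz₀))
      (Complex.slitPlane_ne_zero (.inl (hQ z hz))))
  · have hu := HasWindingNumber.of_mem_slitPlane
      (hv.sub (continuousOn_id.mul Q.continuous.continuousOn)) fun z hz ↦ .inl (hQ z hz)
    simpa using (((HasWindingNumber.const a).mul (.zpow (-1))).mul hu).congr heq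

end WindingNumber

theorem stmt8 (f : ℂ → ℂ) (hf : ContinuousOn f (sphere (0:ℂ) 1))
    (h : ∀ n : ℕ, ∀ P : Polynomial ℂ,
      (∀ z ∈ sphere (0:ℂ) 1, z ^ n * f z + P.eval z ≠ 0) →
      ∀ m : ℤ, HasWindingNumber (fun z => z ^ n * f z + P.eval z) m → 0 ≤ m) :
    (∀ n : ℕ, (∮ z in C(0, 1), z ^ n * f z) = 0) ∧ ExtendsHolo f := by
  suffices hzero : ∀ n : ℕ, (∮ z in C(0, 1), z ^ n * f z) = 0 from
    ⟨hzero, extendsHolo_of_forall_circleIntegral_pow_mul_eq_zero hf hzero⟩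
  intro n
  by_contra hn
  obtain ⟨P, hP, hwind⟩ :=
    exists_polynomial_hasWindingNumber_neg_one ((continuousOn_id.pow n).mul hf) hn
  exact absurd (h n P hP (-1) hwind) (by norm_num)
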